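/- Let (H,A,C) be a Doi-Hopf datum and θ ∈ V_3 a normalized element. Then for every right-left Doi-Hopf module M and every m∈M, Σ m_{<0>} · θ(m_{<-2>} ⊗ m_{<-1>}) = m, where Σ m_{<-2>}⊗m_{<-1>}⊗m_{<0>} denotes the iterated coaction; in other words, the map ν_M(c⊗m) = Σ m_{<0>}·θ(c⊗m_{<-1>}) splits the coaction ρ_M : M → C⊗M. -/

import Mathlib

open TensorProduct

noncomputable section

/-- A Doi-Hopf datum `(H, A, C)`: `H` is a `k`-bialgebra, `A` is a left `H`-comodule
algebra (with coaction `ρ`), and `C` is a right `H`-module coalgebra (with action `act`). -/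
structure DoiHopfDatum (k H A C : Type*) [CommRing k] [Ring H] [Bialgebra k H]
    [Ring A] [Algebra k A] [AddCommGroup C] [Module k C] [Coalgebra k C] where
  /-- the coaction `ρ_A : A → H ⊗ A`, `ρ a = Σ a_{<-1>} ⊗ a_{<0>}` -/
  ρ : A →ₗ[k] H ⊗[k] A
  ρ_coassoc : ∀ a : A,
    (TensorProduct.assoc k H H A)
        ((TensorProduct.map (Coalgebra.comul (R := k)) LinearMap.id) (ρ a))
      = (TensorProduct.map LinearMap.id ρ) (ρ a)
  ρ_counit : ∀ a : A,
    (TensorProduct.lid k A)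
        ((TensorProduct.map (Coalgebra.counit (R := k)) LinearMap.id) (ρ a)) = a
  ρ_mul : ∀ a b : A, ρ (a * b) = ρ a * ρ b
  ρ_one : ρ 1 = 1
  /-- the right `H`-action on `C`, written `act c h = c · h` -/
  act : C →ₗ[k] H →ₗ[k] C
  act_one : ∀ c : C, act c 1 = c
  act_mul : ∀ (c : C) (g h : H), act (act c g) h = act c (g * h)
  comul_act : ∀ (c : C) (h : H),
    Coalgebra.comul (R := k) (act c h)
      = (TensorProduct.map (TensorProduct.lift act) (TensorProduct.lift act))
          ((TensorProduct.tensorTensorTensorComm k C C H H)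
            (Coalgebra.comul (R := k) c ⊗ₜ[k] Coalgebra.comul (R := k) h))
  counit_act : ∀ (c : C) (h : H),
    Coalgebra.counit (R := k) (act c h)
      = Coalgebra.counit (R := k) c * Coalgebra.counit (R := k) h

namespace DoiHopfDatum

variable {k H A C : Type*} [CommRing k] [Ring H] [Bialgebra k H]
    [Ring A] [Algebra k A] [AddCommGroup C] [Module k C] [Coalgebra k C]
variable (D : DoiHopfDatum k H A C)

/-- The action `C ⊗ H → C` as a linear map on the tensor product. -/
def actL : C ⊗[k] H →ₗ[k] C := TensorProduct.lift D.act

/-- The iterated coaction `a ↦ Σ (a_{<-2>} ⊗ a_{<-1>}) ⊗ a_{<0>}`. -/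
def ρ2 : A →ₗ[k] (H ⊗[k] H) ⊗[k] A :=
  (TensorProduct.assoc k H H A).symm.toLinearMap ∘ₗ
    (TensorProduct.map LinearMap.id D.ρ) ∘ₗ D.ρ

/-- The simultaneous action of `H ⊗ H` on `C ⊗ C`. -/
def act2 : (C ⊗[k] C) ⊗[k] (H ⊗[k] H) →ₗ[k] C ⊗[k] C :=
  (TensorProduct.map D.actL D.actL) ∘ₗ
    (TensorProduct.tensorTensorTensorComm k C C H H).toLinearMap

/-- The right `A`-action on `C ⊗ A`: `(c ⊗ b) · a = Σ c·a_{<-1>} ⊗ b·a_{<0>}`. -/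
def rActCA : (C ⊗[k] A) ⊗[k] A →ₗ[k] C ⊗[k] A :=
  (TensorProduct.map D.actL (LinearMap.mul' k A)) ∘ₗ
    (TensorProduct.tensorTensorTensorComm k C A H A).toLinearMap ∘ₗ
    (TensorProduct.map LinearMap.id D.ρ)

/-- The right-hand side of condition (a) of `V₃`:
`(c ⊗ d) ⊗ a ↦ Σ a_{<0>} * θ(c·a_{<-2>} ⊗ d·a_{<-1>})`. -/
def V3aRHS (θ : C ⊗[k] C →ₗ[k] A) : (C ⊗[k] C) ⊗[k] A →ₗ[k] A :=
  (LinearMap.mul' k A) ∘ₗ (TensorProduct.comm k A A).toLinearMap ∘ₗ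
    (TensorProduct.map θ LinearMap.id) ∘ₗ
    (TensorProduct.map D.act2 LinearMap.id) ∘ₗ
    (TensorProduct.assoc k (C ⊗[k] C) (H ⊗[k] H) A).symm.toLinearMap ∘ₗ
    (TensorProduct.map LinearMap.id D.ρ2)

/-- The left-hand side of condition (b) of `V₃`: `c ⊗ d ↦ Σ c_(1) ⊗ θ(c_(2) ⊗ d)`. -/
def V3bLHS (_D : DoiHopfDatum k H A C) (θ : C ⊗[k] C →ₗ[k] A) : C ⊗[k] C →ₗ[k] C ⊗[k] A :=
  (TensorProduct.map LinearMap.id θ) ∘ₗ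
    (TensorProduct.assoc k C C C).toLinearMap ∘ₗ
    (TensorProduct.map (Coalgebra.comul (R := k)) LinearMap.id)

/-- The right-hand side of condition (b) of `V₃`:
`c ⊗ d ↦ Σ d_(2)·θ(c ⊗ d_(1))_{<-1>} ⊗ θ(c ⊗ d_(1))_{<0>}`. -/
def V3bRHS (θ : C ⊗[k] C →ₗ[k] A) : C ⊗[k] C →ₗ[k] C ⊗[k] A :=
  (TensorProduct.map D.actL LinearMap.id) ∘ₗ
    (TensorProduct.assoc k C H A).symm.toLinearMap ∘ₗ
    (TensorProduct.comm k (H ⊗[k] A) C).toLinearMap ∘ₗ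
    (TensorProduct.map D.ρ LinearMap.id) ∘ₗ
    (TensorProduct.map θ LinearMap.id) ∘ₗ
    (TensorProduct.assoc k C C C).symm.toLinearMap ∘ₗ
    (TensorProduct.map LinearMap.id (Coalgebra.comul (R := k)))

/-- `θ : C ⊗ C → A` belongs to `V₃`. -/
def IsV3 (θ : C ⊗[k] C →ₗ[k] A) : Prop :=
  (∀ (c d : C) (a : A), θ (c ⊗ₜ[k] d) * a = D.V3aRHS θ ((c ⊗ₜ[k] d) ⊗ₜ[k] a)) ∧
    D.V3bLHS θ = D.V3bRHS θ

/-- `θ` is normalized: `Σ θ(c_(1) ⊗ c_(2)) = ε(c)1_A`. -/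
def IsNormalizedV3 (_D : DoiHopfDatum k H A C) (θ : C ⊗[k] C →ₗ[k] A) : Prop :=
  ∀ c : C, θ (Coalgebra.comul (R := k) c)
    = algebraMap k A (Coalgebra.counit (R := k) c)

/-- An `A`-integral `γ : C → Hom(C,A)` for the Doi-Hopf datum: its uncurried form
lies in `V₃`. -/
def IsAIntegral (γ : C →ₗ[k] (C →ₗ[k] A)) : Prop :=
  D.IsV3 (TensorProduct.lift γ)

/-- A total `A`-integral: a normalized `A`-integral. -/
def IsTotalAIntegral (γ : C →ₗ[k] (C →ₗ[k] A)) : Prop :=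
  D.IsAIntegral γ ∧ D.IsNormalizedV3 (TensorProduct.lift γ)

end DoiHopfDatum

/-- A right-left Doi-Hopf module over the Doi-Hopf datum `D`: a right `A`-module and
left `C`-comodule `M` satisfying `ρ_M(m·a) = Σ m_{<-1>}·a_{<-1>} ⊗ m_{<0>}·a_{<0>}`. -/
structure DHModule {k H A C : Type*} [CommRing k] [Ring H] [Bialgebra k H]
    [Ring A] [Algebra k A] [AddCommGroup C] [Module k C] [Coalgebra k C]
    (D : DoiHopfDatum k H A C) (M : Type*) [AddCommGroup M] [Module k M] where
  /-- the right `A`-action on `M` -/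
  sm : M →ₗ[k] A →ₗ[k] M
  sm_one : ∀ m : M, sm m 1 = m
  sm_mul : ∀ (m : M) (a b : A), sm (sm m a) b = sm m (a * b)
  /-- the left `C`-coaction `ρ_M : M → C ⊗ M` -/
  cρ : M →ₗ[k] C ⊗[k] M
  cρ_coassoc : ∀ m : M,
    (TensorProduct.assoc k C C M)
        ((TensorProduct.map (Coalgebra.comul (R := k)) LinearMap.id) (cρ m))
      = (TensorProduct.map LinearMap.id cρ) (cρ m)
  cρ_counit : ∀ m : M,
    (TensorProduct.lid k M)
        ((TensorProduct.map (Coalgebra.counit (R := k)) LinearMap.id) (cρ m)) = m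
  compat : ∀ (m : M) (a : A),
    cρ (sm m a)
      = (TensorProduct.map D.actL (TensorProduct.lift sm))
          ((TensorProduct.tensorTensorTensorComm k C M H A)
            (cρ m ⊗ₜ[k] D.ρ a))

namespace DoiHopfDatum

variable {k H A C : Type*} [CommRing k] [Ring H] [Bialgebra k H]
    [Ring A] [Algebra k A] [AddCommGroup C] [Module k C] [Coalgebra k C]
variable (D : DoiHopfDatum k H A C)

/-- The natural transformation attached to `θ : C ⊗ C → A`:
`ν_M (c ⊗ m) = Σ m_{<0>} · θ(c ⊗ m_{<-1>})`. -/
def nuMap (θ : C ⊗[k] C →ₗ[k] A) {M : Type*} [AddCommGroup M] [Module k M]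
    (DM : DHModule D M) : C ⊗[k] M →ₗ[k] M :=
  (TensorProduct.lift DM.sm) ∘ₗ (TensorProduct.comm k A M).toLinearMap ∘ₗ
    (TensorProduct.map θ LinearMap.id) ∘ₗ
    (TensorProduct.assoc k C C M).symm.toLinearMap ∘ₗ
    (TensorProduct.map LinearMap.id DM.cρ)

/-- The right `A`-action on `C ⊗ M`: `(c ⊗ m) · a = Σ c·a_{<-1>} ⊗ m·a_{<0>}`. -/
def actCM {M : Type*} [AddCommGroup M] [Module k M] (DM : DHModule D M) :
    (C ⊗[k] M) ⊗[k] A →ₗ[k] C ⊗[k] M :=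
  (TensorProduct.map D.actL (TensorProduct.lift DM.sm)) ∘ₗ
    (TensorProduct.tensorTensorTensorComm k C M H A).toLinearMap ∘ₗ
    (TensorProduct.map LinearMap.id D.ρ)

end DoiHopfDatum

/-- if `θ ∈ V₃` is normalized then for every Doi-Hopf module `M` the map
`ν_M(c ⊗ m) = Σ m_{<0>}·θ(c ⊗ m_{<-1>})` splits the coaction `ρ_M`, i.e.
`Σ m_{<0>} · θ(m_{<-2>} ⊗ m_{<-1>}) = m`. -/
theorem nuMap_splits_coaction_of_normalized
    {k H A C : Type*} [CommRing k] [Ring H] [Bialgebra k H]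
    [Ring A] [Algebra k A] [AddCommGroup C] [Module k C] [Coalgebra k C]
    (D : DoiHopfDatum k H A C) (θ : C ⊗[k] C →ₗ[k] A)
    (hθ : D.IsV3 θ) (hθn : D.IsNormalizedV3 θ) :
    ∀ (M : Type*) [AddCommGroup M] [Module k M] (DM : DHModule D M) (m : M),
      D.nuMap θ DM (DM.cρ m) = m := by
  intro M _ _ DM m
  -- Normalization on the `C`-leg: `Σ n · θ(c_(1) ⊗ c_(2)) = ε(c) n` for `x = c ⊗ n`.
  have key : ∀ x : C ⊗[k] M,
      TensorProduct.lift DM.sm (TensorProduct.comm k A M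
        (TensorProduct.map θ LinearMap.id
          (TensorProduct.map (Coalgebra.comul (R := k)) LinearMap.id x)))
      = TensorProduct.lid k M
          (TensorProduct.map (Coalgebra.counit (R := k)) LinearMap.id x) := by
    intro x
    induction x using TensorProduct.induction_on with
    | zero => simp
    | add x y hx hy => simp only [map_add, hx, hy]
    | tmul c n =>
      simp [hθn c, Algebra.algebraMap_eq_smul_one, DM.sm_one]
  -- Coassociativity replaces the iterated coaction by `Δ` applied to the `C`-leg of `ρ_M m`.
  have h := DM.cρ_coassoc m
  simp only [DoiHopfDatum.nuMap, LinearMap.comp_apply, LinearEquiv.coe_coe]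
  rw [← h, LinearEquiv.symm_apply_apply, key, DM.cρ_counit]
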